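/- arXiv:math-ph/0305051 — 3 statements merged into one kernel-verified Lean document; each statement's English description precedes it below -/
import Mathlib

section
/- (Bound on renormalized moments.) Let (c̃_{2m})_{m≥1} be real numbers with c̃_2 = 1 and |c̃_{2m}| ≤ (2m)!·c_V for all m ≥ 1, where c_V < ∞. Define for k ≥ 1: c_{2k} := Σ_{m=1}^{k} Σ_{r=1}^{k} Σ_{1≤j_1,…,j_r≤k} Σ_{1≤l_1<…<l_r≤k} δ_{m,|j|} δ_{k,⟨j,l⟩} · (−1)^{m−1} (2k)! / ( ((2l_1)!)^{j_1} ⋯ ((2l_r)!)^{j_r} ) · ( c̃_{2l_1}^{j_1} ⋯ c̃_{2l_r}^{j_r} ) / ( j_1! ⋯ j_r! ), where |j| = j_1+…+j_r and ⟨j,l⟩ = j_1 l_1 + … + j_r l_r. Then |c_{2k}| ≤ (2k · e^{e^{c_V}/2})^{2k+1} for all k ≥ 1. -/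
noncomputable section
open Finset

open Classical in
/-- The renormalized moments (cumulant-type coefficients) `c_{2k}` determined by the
even moments `ct m = c̃_{2m}` via the inclusion-exclusion formula:
`c_{2k} = Σ_{m=1}^{k} Σ_{r=1}^{k} Σ_{1≤j_1,…,j_r≤k} Σ_{1≤l_1<…<l_r≤k} δ_{m,|j|} δ_{k,⟨j,l⟩}
  (−1)^{m−1} (2k)! / (((2l_1)!)^{j_1} ⋯ ((2l_r)!)^{j_r}) ⋅ (c̃_{2l_1}^{j_1} ⋯ c̃_{2l_r}^{j_r})
  / (j_1! ⋯ j_r!)`. -/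
def renormMoment (ct : ℕ → ℝ) (k : ℕ) : ℝ :=
  ∑ m ∈ Finset.Icc 1 k, ∑ r ∈ Finset.Icc 1 k,
    ∑ j ∈ Fintype.piFinset (fun _ : Fin r => Finset.Icc 1 k),
      ∑ l ∈ (Fintype.piFinset (fun _ : Fin r => Finset.Icc 1 k)).filter
            (fun l => StrictMono l),
        (if m = ∑ i, j i then (1:ℝ) else 0) *
        (if k = ∑ i, j i * l i then (1:ℝ) else 0) *
        ((-1:ℝ)^(m-1) * (Nat.factorial (2*k) : ℝ) /
          (∏ i, ((Nat.factorial (2 * l i) : ℝ)) ^ (j i)) *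
          ((∏ i, (ct (l i)) ^ (j i)) / (∏ i, (Nat.factorial (j i) : ℝ))))

lemma card_strictMono_le (k r : ℕ) :
    (open Classical in ((Fintype.piFinset (fun _ : Fin r => Finset.Icc 1 k)).filter
            (fun l => StrictMono l))).card ≤ k.choose r := by
  classical
  have h : (Finset.powersetCard r (Finset.Icc 1 k)).card = k.choose r := by
    simp
  rw [← h]
  refine Finset.card_le_card_of_injOn (fun l => Finset.univ.image l) ?_ ?_
  · intro l hl
    simp only [Finset.coe_filter, Set.mem_ofPred_eq, Fintype.mem_piFinset] at hl
    simp only [Finset.mem_coe, Finset.mem_powersetCard]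
    refine ⟨?_, ?_⟩
    · intro x hx
      obtain ⟨i, -, rfl⟩ := Finset.mem_image.1 hx
      exact hl.1 i
    · rw [Finset.card_image_of_injective _ hl.2.injective]
      simp
  · intro l hl l' hl' heq
    simp only [Finset.coe_filter, Set.mem_ofPred_eq, Fintype.mem_piFinset] at hl hl'
    refine (StrictMono.range_inj hl.2 hl'.2).1 ?_
    have := congrArg (fun s : Finset ℕ => (s : Set ℕ)) heq
    simpa using this

lemma term_bound (x : ℝ) (ct : ℕ → ℝ)
    (hctb : ∀ m : ℕ, 1 ≤ m → |ct m| ≤ (Nat.factorial (2*m) : ℝ) * x)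
    (k m r : ℕ) (j l : Fin r → ℕ) (hl : ∀ i, 1 ≤ l i) (d : ℝ) (hd0 : 0 ≤ d) (hd : d ≤ 1) :
    |(if m = ∑ i, j i then (1:ℝ) else 0) * d *
        ((-1:ℝ)^(m-1) * (Nat.factorial (2*k) : ℝ) /
          (∏ i, ((Nat.factorial (2 * l i) : ℝ)) ^ (j i)) *
          ((∏ i, (ct (l i)) ^ (j i)) / (∏ i, (Nat.factorial (j i) : ℝ))))|
    ≤ (if m = ∑ i, j i then (1:ℝ) else 0) *
      ((Nat.factorial (2*k) : ℝ) * ∏ i, (x ^ (j i) / (Nat.factorial (j i) : ℝ))) := by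
  have hite : (0:ℝ) ≤ (if m = ∑ i, j i then (1:ℝ) else 0) := by split_ifs <;> norm_num
  rw [abs_mul, abs_mul, abs_of_nonneg hite, abs_of_nonneg hd0, mul_assoc]
  refine mul_le_mul_of_nonneg_left ?_ hite
  have key : |((-1:ℝ)^(m-1) * (Nat.factorial (2*k) : ℝ) /
          (∏ i, ((Nat.factorial (2 * l i) : ℝ)) ^ (j i)) *
          ((∏ i, (ct (l i)) ^ (j i)) / (∏ i, (Nat.factorial (j i) : ℝ))))|
      = (Nat.factorial (2*k) : ℝ) *
        ∏ i, ((|ct (l i)| / (Nat.factorial (2 * l i) : ℝ)) ^ (j i) / (Nat.factorial (j i) : ℝ)) := by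
    simp only [abs_mul, abs_div, abs_pow, Finset.abs_prod, abs_neg, abs_one, one_pow, one_mul,
      Nat.abs_cast, div_pow, Finset.prod_div_distrib]
    ring
  rw [key]
  refine (mul_le_of_le_one_left (by positivity) hd).trans ?_
  refine mul_le_mul_of_nonneg_left ?_ (by positivity)
  refine Finset.prod_le_prod (fun i _ => by positivity) (fun i _ => ?_)
  have : |ct (l i)| / (Nat.factorial (2 * l i) : ℝ) ≤ x := by
    rw [div_le_iff₀ (by positivity), mul_comm]
    exact hctb _ (hl i)
  gcongr

lemma exp_part (x : ℝ) (hx : 0 ≤ x) (k : ℕ) :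
    ∑ a ∈ Finset.Icc 1 k, x ^ a / (Nat.factorial a : ℝ) ≤ Real.exp x - 1 := by
  have h := Real.sum_le_exp_of_nonneg hx (k+1)
  rw [Finset.sum_range_succ'] at h
  have h2 : ∑ a ∈ Finset.Icc 1 k, x ^ a / (Nat.factorial a : ℝ)
      = ∑ a ∈ Finset.range k, x ^ (a+1) / (Nat.factorial (a+1) : ℝ) := by
    rw [Finset.range_eq_Ico, Finset.sum_Ico_add' (fun a => x ^ a / (Nat.factorial a : ℝ)) 0 k 1]
    rfl
  simp at h
  rw [h2]
  linarith

/-- **Statement 6.** (Bound on renormalized moments.) If `c̃_2 = 1` and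
`|c̃_{2m}| ≤ (2m)!·c_V` for all `m ≥ 1`, then the renormalized moments satisfy
`|c_{2k}| ≤ (2k · e^{e^{c_V}/2})^{2k+1}` for all `k ≥ 1`. -/
theorem renormMoment_bound (cV : ℝ) (ct : ℕ → ℝ) (hct2 : ct 1 = 1)
    (hctb : ∀ m : ℕ, 1 ≤ m → |ct m| ≤ (Nat.factorial (2*m) : ℝ) * cV) :
    ∀ k : ℕ, 1 ≤ k →
      |renormMoment ct k| ≤ ((2*k : ℝ) * Real.exp (Real.exp cV / 2)) ^ (2*k+1) := by
  classical
  intro k hk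
  have hx : 0 ≤ cV := by
    have := hctb 1 le_rfl
    rw [hct2] at this
    norm_num [Nat.factorial] at this
    linarith
  have hE : 0 ≤ Real.exp cV - 1 := by linarith [Real.add_one_le_exp cV]
  have h1 : |renormMoment ct k| ≤ ∑ r ∈ Finset.Icc 1 k,
      (k.choose r : ℝ) * ((Nat.factorial (2*k) : ℝ) * (Real.exp cV - 1) ^ r) := by
    unfold renormMoment
    rw [Finset.sum_comm]
    refine (Finset.abs_sum_le_sum_abs _ _).trans (Finset.sum_le_sum fun r _ => ?_)
    rw [Finset.sum_comm]
    calc _ ≤ ∑ j ∈ Fintype.piFinset (fun _ : Fin r => Finset.Icc 1 k),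
          (k.choose r : ℝ) * ((Nat.factorial (2*k) : ℝ) *
            ∏ i, (cV ^ (j i) / (Nat.factorial (j i) : ℝ))) := by
          refine (Finset.abs_sum_le_sum_abs _ _).trans (Finset.sum_le_sum fun j _ => ?_)
          rw [Finset.sum_comm]
          have hP : 0 ≤ (Nat.factorial (2*k) : ℝ) *
            ∏ i, (cV ^ (j i) / (Nat.factorial (j i) : ℝ)) := by positivity
          refine le_trans (Finset.abs_sum_le_sum_abs _ _) ?_
          refine le_trans (Finset.sum_le_card_nsmul _ _ ((Nat.factorial (2*k) : ℝ) *
            ∏ i, (cV ^ (j i) / (Nat.factorial (j i) : ℝ))) ?_) ?_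
          · intro l hl
            rw [Finset.mem_filter, Fintype.mem_piFinset] at hl
            have hl1 : ∀ i, 1 ≤ l i := fun i => (Finset.mem_Icc.1 (hl.1 i)).1
            refine (Finset.abs_sum_le_sum_abs _ _).trans ?_
            refine (Finset.sum_le_sum fun m _ => term_bound cV ct hctb k m r j l hl1 _ ?_ ?_).trans ?_
            · split_ifs <;> norm_num
            · split_ifs <;> norm_num
            · rw [← Finset.sum_mul]
              refine mul_le_of_le_one_left hP ?_
              rw [Finset.sum_ite_eq' (Finset.Icc 1 k) (∑ i, j i) (fun _ => (1:ℝ))]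
              split_ifs <;> norm_num
          · rw [nsmul_eq_mul]
            refine mul_le_mul_of_nonneg_right ?_ hP
            exact_mod_cast card_strictMono_le k r
      _ = (k.choose r : ℝ) * ((Nat.factorial (2*k) : ℝ) *
            (∑ a ∈ Finset.Icc 1 k, cV ^ a / (Nat.factorial a : ℝ)) ^ r) := by
          rw [← Finset.mul_sum, ← Finset.mul_sum]
          rw [← Finset.prod_univ_sum (fun _ : Fin r => Finset.Icc 1 k)
            (fun _ a => cV ^ a / (Nat.factorial a : ℝ))]
          simp
      _ ≤ _ := by
          have := exp_part cV hx k
          have h0 : 0 ≤ ∑ a ∈ Finset.Icc 1 k, cV ^ a / (Nat.factorial a : ℝ) :=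
            Finset.sum_nonneg fun a _ => by positivity
          gcongr
  have h2 : ∑ r ∈ Finset.Icc 1 k,
      (k.choose r : ℝ) * ((Nat.factorial (2*k) : ℝ) * (Real.exp cV - 1) ^ r)
      ≤ (Nat.factorial (2*k) : ℝ) * Real.exp cV ^ k := by
    have h3 : Real.exp cV ^ k = ∑ r ∈ Finset.range (k+1),
        (Real.exp cV - 1) ^ r * (k.choose r : ℝ) := by
      have := add_pow (Real.exp cV - 1) 1 k
      simpa using this
    rw [h3, Finset.mul_sum]
    refine le_trans (le_of_eq (Finset.sum_congr rfl fun r _ => ?_))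
      (Finset.sum_le_sum_of_subset_of_nonneg (s := Finset.Icc 1 k) ?_ ?_)
    · ring
    · intro r hr
      simp only [Finset.mem_Icc, Finset.mem_range] at *
      omega
    · intro r _ _
      positivity
  refine (h1.trans h2).trans ?_
  have hf : (Nat.factorial (2*k) : ℝ) ≤ (2*k : ℝ) ^ (2*k+1) := by
    have hn : Nat.factorial (2*k) ≤ (2*k) ^ (2*k+1) :=
      (Nat.factorial_le_pow (2*k)).trans (Nat.pow_le_pow_right (by omega) (by omega))
    exact_mod_cast hn
  have he : Real.exp cV ^ k ≤ Real.exp (Real.exp cV / 2) ^ (2*k+1) := by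
    rw [← Real.exp_nat_mul, ← Real.exp_nat_mul]
    apply Real.exp_le_exp.2
    have h5 := Real.add_one_le_exp cV
    have hk0 : (0:ℝ) ≤ k := by positivity
    push_cast
    nlinarith [mul_le_mul_of_nonneg_left h5 hk0]
  rw [mul_pow]
  gcongr
end
end

section
/- (Uniform bound on energy shells in 3D.) There exists a finite constant C such that for all real a ≤ b, the Lebesgue measure of the set { p ∈ [0,1]³ : a ≤ e_Δ(p) ≤ b } is at most C (b − a). In particular, for all α ∈ ℝ, ε > 0 and j ≥ 0, the measure of { p ∈ [0,1]³ : 2^j ε < |e_Δ(p) − α| ≤ 2^{j+1} ε } is at most C 2^j ε. -/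
noncomputable section
open MeasureTheory Real

/-- The Fourier symbol `e_Δ(k) = 2 Σ_{i=1}^3 sin²(π k_i)` of the lattice kinetic energy
`-½Δ` on `ℤ³`; it takes values in `[0,6]`. -/
def eDelta (k : Fin 3 → ℝ) : ℝ := 2 * ∑ i, Real.sin (π * k i)^2


lemma cos_diff_lower (s x y : ℝ) (hs : 0 < s) (hx : 0 ≤ x) (hxy : x ≤ y) (hy : y ≤ 1/2)
    (h1 : s ≤ sin (2*π*x)) (h2 : s ≤ sin (2*π*y)) :
    4 * s * (y - x) ≤ cos (2*π*x) - cos (2*π*y) := by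
  have hpi := Real.pi_pos
  have e : cos (2*π*x) - cos (2*π*y) = 2 * sin (π*(x+y)) * sin (π*(y-x)) := by
    rw [Real.cos_sub_cos]
    rw [show (2*π*x - 2*π*y)/2 = -(π*(y-x)) by ring, Real.sin_neg,
      show (2*π*x + 2*π*y)/2 = π*(x+y) by ring]
    ring
  have hc := strictConcaveOn_sin_Icc.concaveOn.2
    (show 2*π*x ∈ Set.Icc 0 π from ⟨by positivity, by nlinarith⟩)
    (show 2*π*y ∈ Set.Icc 0 π from ⟨by nlinarith, by nlinarith⟩)
    (show (0:ℝ) ≤ 1/2 by norm_num) (show (0:ℝ) ≤ 1/2 by norm_num) (by norm_num)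
  simp only [smul_eq_mul] at hc
  rw [show 1/2*(2*π*x) + 1/2*(2*π*y) = π*(x+y) by ring] at hc
  have hj := Real.mul_le_sin (x := π*(y-x)) (by nlinarith) (by nlinarith)
  rw [show 2/π*(π*(y-x)) = 2*(y-x) by field_simp] at hj
  rw [e]
  have : s * (2*(y-x)) ≤ sin (π*(x+y)) * sin (π*(y-x)) :=
    mul_le_mul (by linarith) hj (by linarith) (by linarith)
  linarith

lemma cos_abs_lower (s x y : ℝ) (hs : 0 < s) (hx : 0 ≤ x) (hx' : x ≤ 1/2) (hy0 : 0 ≤ y) (hy : y ≤ 1/2)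
    (h1 : s ≤ sin (2*π*x)) (h2 : s ≤ sin (2*π*y)) :
    4 * s * |x - y| ≤ |cos (2*π*x) - cos (2*π*y)| := by
  rcases le_total x y with h | h
  · rw [abs_of_nonpos (by linarith)]
    have := cos_diff_lower s x y hs hx h hy h1 h2
    exact le_trans (by linarith) (le_abs_self _)
  · rw [abs_of_nonneg (by linarith), abs_sub_comm]
    have := cos_diff_lower s y x hs hy0 h hx' h2 h1
    exact le_trans (by linarith) (le_abs_self _)

lemma sin_reflect (x : ℝ) : sin (2*π*(1-x)) = - sin (2*π*x) := by
  rw [show 2*π*(1-x) = 2*π - 2*π*x by ring, Real.sin_two_pi_sub]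
lemma cos_reflect (x : ℝ) : cos (2*π*(1-x)) = cos (2*π*x) := by
  rw [show 2*π*(1-x) = 2*π - 2*π*x by ring, Real.cos_two_pi_sub]

lemma vol_le_of_abs (A : Set ℝ) (D : ℝ) (h : ∀ x ∈ A, ∀ y ∈ A, |x - y| ≤ D) :
    volume A ≤ ENNReal.ofReal D := by
  refine (Real.volume_le_diam A).trans (Metric.ediam_le fun x hx y hy => ?_)
  rw [edist_dist, Real.dist_eq]
  exact ENNReal.ofReal_le_ofReal (h x hx y hy)

lemma slice_bound (s c d : ℝ) (hs : 0 < s) (hcd : c ≤ d) :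
    volume {x : ℝ | 0 ≤ x ∧ x ≤ 1 ∧ s ≤ |sin (2*π*x)| ∧ c ≤ cos (2*π*x) ∧ cos (2*π*x) ≤ d}
      ≤ ENNReal.ofReal ((d-c) * s⁻¹) := by
  have key : ∀ x y : ℝ, 4 * s * |x - y| ≤ d - c → |x - y| ≤ (d-c) * s⁻¹ / 2 := by
    intro x y h
    rw [← div_eq_mul_inv, div_div, le_div_iff₀ (by positivity)]
    have := abs_nonneg (x-y)
    nlinarith [mul_nonneg hs.le this]
  have hpi := Real.pi_pos
  set A := {x : ℝ | 0 ≤ x ∧ x ≤ 1/2 ∧ s ≤ sin (2*π*x) ∧ c ≤ cos (2*π*x) ∧ cos (2*π*x) ≤ d} with hA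
  set B := {x : ℝ | 0 ≤ 1-x ∧ 1-x ≤ 1/2 ∧ s ≤ sin (2*π*(1-x)) ∧ c ≤ cos (2*π*(1-x)) ∧ cos (2*π*(1-x)) ≤ d} with hB
  have hsub : {x : ℝ | 0 ≤ x ∧ x ≤ 1 ∧ s ≤ |sin (2*π*x)| ∧ c ≤ cos (2*π*x) ∧ cos (2*π*x) ≤ d} ⊆ A ∪ B := by
    rintro x ⟨h0, h1, h2, h3, h4⟩
    rcases le_total x (1/2) with h | h
    · left
      refine ⟨h0, h, ?_, h3, h4⟩
      rwa [abs_of_nonneg (Real.sin_nonneg_of_nonneg_of_le_pi (by positivity) (by nlinarith))] at h2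
    · right
      refine ⟨by linarith, by linarith, ?_, by rwa [cos_reflect], by rwa [cos_reflect]⟩
      rw [← abs_neg, ← sin_reflect] at h2
      rwa [abs_of_nonneg (Real.sin_nonneg_of_nonneg_of_le_pi (mul_nonneg (by positivity) (by linarith)) (by nlinarith))] at h2
  have vA : volume A ≤ ENNReal.ofReal ((d-c) * s⁻¹ / 2) := by
    refine vol_le_of_abs _ _ fun x hx y hy => key x y ?_
    refine (cos_abs_lower s x y hs hx.1 hx.2.1 hy.1 hy.2.1 hx.2.2.1 hy.2.2.1).trans ?_
    rw [abs_le]; constructor <;> linarith [hx.2.2.2.1, hx.2.2.2.2, hy.2.2.2.1, hy.2.2.2.2]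
  have vB : volume B ≤ ENNReal.ofReal ((d-c) * s⁻¹ / 2) := by
    refine vol_le_of_abs _ _ fun x hx y hy => key x y ?_
    have := cos_abs_lower s (1-x) (1-y) hs hx.1 hx.2.1 hy.1 hy.2.1 hx.2.2.1 hy.2.2.1
    rw [show 1 - x - (1 - y) = y - x by ring, abs_sub_comm] at this
    refine this.trans ?_
    rw [abs_le]; constructor <;> linarith [hx.2.2.2.1, hx.2.2.2.2, hy.2.2.2.1, hy.2.2.2.2]
  have hn : 0 ≤ (d-c) * s⁻¹ / 2 := by have := sub_nonneg.2 hcd; positivity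
  calc _ ≤ volume (A ∪ B) := measure_mono hsub
    _ ≤ volume A + volume B := measure_union_le _ _
    _ ≤ _ := add_le_add vA vB
    _ = _ := by rw [← ENNReal.ofReal_add hn hn]; congr 1; ring

/-- weight -/
def gw (x : ℝ) : ENNReal := (Set.Icc (0:ℝ) 1).indicator (fun x => (ENNReal.ofReal |sin (2*π*x)|)^(-(1/2):ℝ)) x

lemma gw_meas : Measurable gw := by
  unfold gw
  refine Measurable.indicator ?_ measurableSet_Icc
  fun_prop

lemma sin_low (x : ℝ) (h0 : 0 ≤ x) (h1 : x ≤ 1/4) : x ≤ sin (2*π*x) := by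
  have hpi := Real.pi_pos
  have := Real.mul_le_sin (x := 2*π*x) (by positivity) (by nlinarith)
  rw [show 2/π*(2*π*x) = 4*x by field_simp; ring] at this
  linarith

lemma gw_int : ∫⁻ x, gw x < ⊤ := by
  set r : ℝ := -(1/2) with hr
  set H : ℝ → ℝ := fun x => |x^r| + |(1/2-x)^r| + |(x-1/2)^r| + |(1-x)^r| with hH
  have f0 : ∀ a b : ℝ, IntervalIntegrable (fun x : ℝ => x^r) volume a b := fun a b =>
    intervalIntegral.intervalIntegrable_rpow' (by norm_num [hr])
  have hi : IntegrableOn H (Set.Icc 0 1) := by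
    rw [integrableOn_Icc_iff_integrableOn_Ioc, ← intervalIntegrable_iff_integrableOn_Ioc_of_le (by norm_num)]
    have i1 := (f0 0 1).abs
    have i2 := ((f0 (1/2) (-1/2)).comp_sub_left (1/2)).abs
    have i3 := ((f0 (-1/2) (1/2)).comp_sub_right (1/2)).abs
    have i4 := ((f0 1 0).comp_sub_left 1).abs
    norm_num at i2 i3 i4
    simpa [hH, hr] using ((i1.add i2).add i3).add i4
  have hfin : ∫⁻ x in Set.Icc (0:ℝ) 1, ENNReal.ofReal (H x) < ⊤ := by
    exact hi.lintegral_lt_top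
  unfold gw
  rw [lintegral_indicator measurableSet_Icc]
  refine lt_of_le_of_lt (lintegral_mono_ae ?_) hfin
  have ne : ∀ c : ℝ, ∀ᵐ x ∂(volume.restrict (Set.Icc (0:ℝ) 1)), x ≠ c := fun c =>
    ae_restrict_of_ae (Measure.ae_ne volume c)
  filter_upwards [ne 0, ne (1/2), ne 1, ae_restrict_mem measurableSet_Icc] with x n0 n1 n2 hx
  have key : ∀ u : ℝ, 0 < u → u ≤ |sin (2*π*x)| → |u^r| ≤ H x →
      (ENNReal.ofReal |sin (2*π*x)|)^r ≤ ENNReal.ofReal (H x) := by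
    intro u hu h1 h2
    rw [ENNReal.ofReal_rpow_of_pos (lt_of_lt_of_le hu h1)]
    refine ENNReal.ofReal_le_ofReal (le_trans ?_ ((le_abs_self _).trans h2))
    exact Real.rpow_le_rpow_of_nonpos hu h1 (by norm_num [hr])
  have p1 := abs_nonneg (x^r)
  have p2 := abs_nonneg ((1/2-x)^r)
  have p3 := abs_nonneg ((x-1/2)^r)
  have p4 := abs_nonneg ((1-x)^r)
  have x0 : 0 < x := lt_of_le_of_ne hx.1 (Ne.symm n0)
  have x1 : x < 1 := lt_of_le_of_ne hx.2 n2
  rcases lt_or_gt_of_ne n1 with h | h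
  · rcases le_total x (1/4) with h' | h'
    · refine key x x0 ((sin_low x x0.le h').trans (le_abs_self _)) ?_
      simp only [hH]; linarith
    · refine key (1/2-x) (by linarith) ((sin_low (1/2-x) (by linarith) (by linarith)).trans ?_) ?_
      · rw [show 2*π*(1/2-x) = π - 2*π*x by ring, Real.sin_pi_sub]; exact le_abs_self _
      · simp only [hH]; linarith
  · rcases le_total x (3/4) with h' | h'
    · refine key (x-1/2) (by linarith) ((sin_low (x-1/2) (by linarith) (by linarith)).trans ?_) ?_
      · rw [show 2*π*(x-1/2) = 2*π*x - π by ring, Real.sin_sub_pi]; exact neg_le_abs _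
      · simp only [hH]; linarith
    · refine key (1-x) (by linarith) ((sin_low (1-x) (by linarith) (by linarith)).trans ?_) ?_
      · rw [sin_reflect]; exact neg_le_abs _
      · simp only [hH]; linarith

lemma gw_int2 : ∫⁻ q : Fin 2 → ℝ, gw (q 0) * gw (q 1) = (∫⁻ x, gw x) * (∫⁻ x, gw x) := by
  have h := (volume_preserving_finTwoArrow ℝ).lintegral_comp
    (f := fun z : ℝ × ℝ => gw z.1 * gw z.2)
    ((gw_meas.comp measurable_fst).mul (gw_meas.comp measurable_snd))
  have h2 := lintegral_prod_mul (μ := (volume : Measure ℝ)) (ν := (volume : Measure ℝ))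
    gw_meas.aemeasurable gw_meas.aemeasurable
  rw [← h2]
  exact h

lemma eDelta_split (i : Fin 3) (t : ℝ) (q : Fin 2 → ℝ) :
    eDelta (i.insertNth t q) = 3 - cos (2*π*t) - cos (2*π*q 0) - cos (2*π*q 1) := by
  have h : ∀ x : ℝ, 2 * sin (π*x)^2 = 1 - cos (2*π*x) := by
    intro x
    rw [show 2*π*x = 2*(π*x) by ring, Real.cos_two_mul, Real.cos_sq']; ring
  unfold eDelta
  rw [Fin.sum_univ_succAbove _ i]
  simp only [Fin.insertNth_apply_same, Fin.insertNth_apply_succAbove, Fin.sum_univ_two]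
  linarith [h t, h (q 0), h (q 1)]

lemma eDelta_cont : Continuous eDelta := by
  unfold eDelta; fun_prop

/-- The part of the shell where the `i`-th partial derivative dominates. -/
def shellPart (a b : ℝ) (i : Fin 3) : Set (Fin 3 → ℝ) :=
  {p | p ∈ Set.Icc 0 1 ∧ (∀ j, |sin (2*π*p j)| ≤ |sin (2*π*p i)|) ∧ a ≤ eDelta p ∧ eDelta p ≤ b}

lemma shellPart_meas (a b : ℝ) (i : Fin 3) : MeasurableSet (shellPart a b i) := by
  refine IsClosed.measurableSet ?_
  unfold shellPart
  refine isClosed_Icc.inter (IsClosed.inter ?_ ((isClosed_le continuous_const eDelta_cont).inter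
    (isClosed_le eDelta_cont continuous_const)))
  have e : {p : Fin 3 → ℝ | ∀ j, |sin (2*π*p j)| ≤ |sin (2*π*p i)|}
      = ⋂ j, {p : Fin 3 → ℝ | |sin (2*π*p j)| ≤ |sin (2*π*p i)|} := by
    ext p; simp
  have hcl : IsClosed {p : Fin 3 → ℝ | ∀ j, |sin (2*π*p j)| ≤ |sin (2*π*p i)|} := by
    rw [e]
    exact isClosed_iInter fun j => isClosed_le (by fun_prop) (by fun_prop)
  exact hcl

lemma slice_le (a b : ℝ) (hab : a < b) (i : Fin 3) (q : Fin 2 → ℝ) :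
    volume {t : ℝ | i.insertNth t q ∈ shellPart a b i}
      ≤ ENNReal.ofReal (b - a) * (gw (q 0) * gw (q 1)) := by
  by_cases hq : q 0 ∈ Set.Icc (0:ℝ) 1 ∧ q 1 ∈ Set.Icc (0:ℝ) 1
  swap
  · have : {t : ℝ | (i.insertNth t q : Fin 3 → ℝ) ∈ shellPart a b i} = ∅ := by
      ext t
      simp only [Set.mem_ofPred_eq, Set.mem_empty_iff_false, iff_false]
      intro h
      apply hq
      have h' := h.1
      have e : ∀ j, q j ∈ Set.Icc (0:ℝ) 1 := fun j => by
        have h1 := h'.1 (i.succAbove j)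
        have h2 := h'.2 (i.succAbove j)
        simp only [Fin.insertNth_apply_succAbove] at h1 h2
        exact ⟨h1, h2⟩
      exact ⟨e 0, e 1⟩
    rw [this]; simp
  have hg0 : gw (q 0) = (ENNReal.ofReal |sin (2*π*q 0)|)^(-(1/2):ℝ) := Set.indicator_of_mem hq.1 _
  have hg1 : gw (q 1) = (ENNReal.ofReal |sin (2*π*q 1)|)^(-(1/2):ℝ) := Set.indicator_of_mem hq.2 _
  have hne : ∀ x : ℝ, (ENNReal.ofReal |sin (2*π*x)|)^(-(1/2):ℝ) ≠ 0 := by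
    intro x h
    rw [ENNReal.rpow_eq_zero_iff] at h
    rcases h with h | h
    · linarith [h.2]
    · exact ENNReal.ofReal_ne_top h.1
  have hba : ENNReal.ofReal (b - a) ≠ 0 := by
    simpa using hab
  rw [hg0, hg1]
  set s0 := |sin (2*π*q 0)| with hs0
  set s1 := |sin (2*π*q 1)| with hs1
  have hn0 : 0 ≤ s0 := abs_nonneg _
  rcases hn0.eq_or_lt with h0 | h0
  · rw [← h0, ENNReal.ofReal_zero, ENNReal.zero_rpow_of_neg (by norm_num), ENNReal.top_mul (hne _),
      ENNReal.mul_top hba]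
    exact le_top
  have hn1 : 0 ≤ s1 := abs_nonneg _
  rcases hn1.eq_or_lt with h1 | h1
  · rw [← h1, ENNReal.ofReal_zero, ENNReal.zero_rpow_of_neg (by norm_num), ENNReal.mul_top (hne _),
      ENNReal.mul_top hba]
    exact le_top
  have hs : 0 < s0^(1/2:ℝ) * s1^(1/2:ℝ) := by positivity
  rw [ENNReal.ofReal_rpow_of_pos h0, ENNReal.ofReal_rpow_of_pos h1,
    ← ENNReal.ofReal_mul (by positivity), ← ENNReal.ofReal_mul (by linarith),
    Real.rpow_neg h0.le, Real.rpow_neg h1.le, ← mul_inv]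
  set c := 3 - cos (2*π*q 0) - cos (2*π*q 1) with hc
  have := slice_bound _ (c - b) (c - a) hs (by linarith)
  rw [show c - a - (c - b) = b - a by ring] at this
  refine (measure_mono ?_).trans this
  rintro t ⟨m1, m2, m3, m4⟩
  have a1 := m1.1 i
  have a2 := m1.2 i
  have b1 := m2 (i.succAbove 0)
  have b2 := m2 (i.succAbove 1)
  simp only [Fin.insertNth_apply_succAbove, Fin.insertNth_apply_same] at a1 a2 b1 b2
  rw [eDelta_split] at m3 m4
  refine ⟨a1, a2, ?_, by linarith, by linarith⟩
  set M := |sin (2*π*t)|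
  have hM : 0 ≤ M := abs_nonneg _
  calc s0^(1/2:ℝ) * s1^(1/2:ℝ) ≤ M^(1/2:ℝ) * M^(1/2:ℝ) := by gcongr
    _ = M := by rw [← Real.sqrt_eq_rpow, Real.mul_self_sqrt hM]

lemma shellPart_le (a b : ℝ) (hab : a < b) (i : Fin 3) :
    volume (shellPart a b i) ≤ ENNReal.ofReal (b - a) * ((∫⁻ x, gw x) * (∫⁻ x, gw x)) := by
  have mp := (volume_preserving_piFinSuccAbove (fun _ : Fin 3 => ℝ) i).symm
  have hm := shellPart_meas a b i
  rw [← mp.measure_preimage hm.nullMeasurableSet, Measure.volume_eq_prod,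
    Measure.prod_apply_symm (mp.measurable hm), ← gw_int2,
    ← lintegral_const_mul' _ _ ENNReal.ofReal_ne_top]
  exact lintegral_mono fun q => slice_le a b hab i q

lemma shell_lt (a b : ℝ) (hab : a < b) :
    volume {p : Fin 3 → ℝ | p ∈ Set.Icc 0 1 ∧ a ≤ eDelta p ∧ eDelta p ≤ b}
      ≤ ENNReal.ofReal (3 * ((∫⁻ x, gw x) * (∫⁻ x, gw x)).toReal * (b - a)) := by
  have hsub : {p : Fin 3 → ℝ | p ∈ Set.Icc 0 1 ∧ a ≤ eDelta p ∧ eDelta p ≤ b}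
      ⊆ ⋃ i, shellPart a b i := by
    rintro p ⟨h1, h2, h3⟩
    obtain ⟨i, hi⟩ := Finite.exists_max (fun j => |sin (2*π*p j)|)
    exact Set.mem_iUnion.2 ⟨i, h1, hi, h2, h3⟩
  have hK : (∫⁻ x, gw x) * (∫⁻ x, gw x) ≠ ⊤ := ENNReal.mul_ne_top gw_int.ne gw_int.ne
  refine (measure_mono hsub).trans ((measure_iUnion_fintype_le _ _).trans
    ((Finset.sum_le_sum fun i _ => shellPart_le a b hab i).trans (le_of_eq ?_)))
  rw [ENNReal.ofReal_mul (by positivity), ENNReal.ofReal_mul (by norm_num), ENNReal.ofReal_toReal hK]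
  simp
  ring

lemma shell_le (a b : ℝ) (hab : a ≤ b) :
    volume {p : Fin 3 → ℝ | p ∈ Set.Icc 0 1 ∧ a ≤ eDelta p ∧ eDelta p ≤ b}
      ≤ ENNReal.ofReal (3 * ((∫⁻ x, gw x) * (∫⁻ x, gw x)).toReal * (b - a)) := by
  set C := 3 * ((∫⁻ x, gw x) * (∫⁻ x, gw x)).toReal with hC
  have ht : Filter.Tendsto (fun η : ℝ => ENNReal.ofReal (C * (b + η - a))) (nhdsWithin 0 (Set.Ioi 0))
      (nhds (ENNReal.ofReal (C * (b - a)))) := by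
    have : Continuous (fun η : ℝ => ENNReal.ofReal (C * (b + η - a))) :=
      ENNReal.continuous_ofReal.comp (by fun_prop)
    have h := (this.tendsto 0).mono_left (nhdsWithin_le_nhds (s := Set.Ioi 0))
    simpa using h
  refine ge_of_tendsto ht ?_
  filter_upwards [self_mem_nhdsWithin] with η hη
  have hη' : 0 < η := hη
  refine le_trans (measure_mono ?_) (shell_lt a (b + η) (by linarith))
  rintro p ⟨h1, h2, h3⟩
  exact ⟨h1, h2, by linarith⟩


/-- **Statement 10.** (Uniform bound on energy shells in 3D.) The Lebesgue measure of
`{p ∈ [0,1]³ : a ≤ e_Δ(p) ≤ b}` is at most `C (b − a)`, uniformly in `a ≤ b`; in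
particular dyadic shells `{2^j ε < |e_Δ − α| ≤ 2^{j+1} ε}` have measure at most `C 2^j ε`. -/
theorem energy_shell_bound_3d :
    ∃ C : ℝ, 0 ≤ C ∧
      (∀ a b : ℝ, a ≤ b →
        volume {p : Fin 3 → ℝ | p ∈ Set.Icc 0 1 ∧ a ≤ eDelta p ∧ eDelta p ≤ b}
          ≤ ENNReal.ofReal (C * (b - a))) ∧
      (∀ α ε : ℝ, 0 < ε → ∀ j : ℕ,
        volume {p : Fin 3 → ℝ | p ∈ Set.Icc 0 1 ∧
            2^j * ε < |eDelta p - α| ∧ |eDelta p - α| ≤ 2^(j+1) * ε}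
          ≤ ENNReal.ofReal (C * 2^j * ε)) := by
  set C := 3 * ((∫⁻ x, gw x) * (∫⁻ x, gw x)).toReal with hC
  have hC0 : 0 ≤ C := by positivity
  refine ⟨4 * C, by positivity, fun a b hab => ?_, fun α ε hε j => ?_⟩
  · refine (shell_le a b hab).trans (ENNReal.ofReal_le_ofReal ?_)
    nlinarith [mul_nonneg hC0 (sub_nonneg.2 hab)]
  · have hp : 0 < (2:ℝ)^(j+1) * ε := by positivity
    refine le_trans (measure_mono ?_)
      ((shell_le (α - 2^(j+1) * ε) (α + 2^(j+1) * ε) (by linarith)).trans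
        (ENNReal.ofReal_le_ofReal (le_of_eq ?_)))
    · rintro p ⟨h1, _, h3⟩
      rw [abs_le] at h3
      exact ⟨h1, by linarith [h3.1], by linarith [h3.2]⟩
    · rw [← hC]; ring
end
end

section
/- (Measure of the near-degenerate parameter set.) For real α, β define α_1(k) := −cos 2πk + 3 − β and α_2(k) = α_3(k) := −cos 2πk + 3 − α, and for 0 < τ < 1 set U_τ := { (p_3, q_3) ∈ [0,1]² : |α_1(q_3)| < τ, |α_2(p_3)| < τ, |α_3(p_3 − q_3)| < τ } (arguments modulo 1). Then there exists a finite constant C, uniform in α, β and τ, such that the Lebesgue measure of U_τ is at most C √τ. -/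
noncomputable section
open MeasureTheory Real

theorem cos_gap {x y : ℝ} (hx : 0 ≤ x) (hxy : x ≤ y) (hy : y ≤ 1 / 2) :
    8 * (y - x) ^ 2 ≤ Real.cos (2 * π * x) - Real.cos (2 * π * y) := by
  have hpi := Real.pi_pos
  have e1 : Real.cos (2 * π * x) - Real.cos (2 * π * y)
      = 2 * Real.sin (π * y + π * x) * Real.sin (π * y - π * x) := by
    have h1 : 2 * π * x = (π * y + π * x) - (π * y - π * x) := by ring
    have h2 : 2 * π * y = (π * y + π * x) + (π * y - π * x) := by ring
    rw [h1, h2, Real.cos_sub (π * y + π * x), Real.cos_add (π * y + π * x)]; ring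
  have e2 : Real.sin (π * y + π * x) - Real.sin (π * y - π * x)
      = 2 * (Real.sin (π * x) * Real.cos (π * y)) := by
    rw [Real.sin_add, Real.sin_sub]; ring
  have hs : 0 ≤ Real.sin (π * x) :=
    Real.sin_nonneg_of_nonneg_of_le_pi (by positivity) (by nlinarith)
  have hc : 0 ≤ Real.cos (π * y) :=
    Real.cos_nonneg_of_neg_pi_div_two_le_of_le (by nlinarith) (by nlinarith)
  have hm := Real.mul_le_sin (x := π * y - π * x) (by nlinarith) (by nlinarith)
  have e3 : 2 / π * (π * y - π * x) = 2 * (y - x) := by field_simp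
  rw [e3] at hm
  have := mul_nonneg hs hc
  rw [e1]
  nlinarith

theorem dist_bound {x y τ c : ℝ} (hx : 0 ≤ x) (hx' : x ≤ 1 / 2) (hy0 : 0 ≤ y) (hy : y ≤ 1 / 2)
    (h1 : |-Real.cos (2 * π * x) + 3 - c| < τ) (h2 : |-Real.cos (2 * π * y) + 3 - c| < τ) :
    |x - y| ≤ Real.sqrt τ / 2 := by
  rw [abs_lt] at h1 h2
  have h : |x - y| * 2 ≤ Real.sqrt τ := by
    apply Real.le_sqrt_of_sq_le
    rw [mul_pow, sq_abs]
    rcases le_total x y with h | h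
    · have := cos_gap hx h hy
      nlinarith
    · have := cos_gap hy0 h hx'
      nlinarith
  linarith

theorem slice_measure (c τ : ℝ) :
    volume {x : ℝ | x ∈ Set.Icc (0:ℝ) 1 ∧ |-Real.cos (2 * π * x) + 3 - c| < τ}
      ≤ ENNReal.ofReal (Real.sqrt τ) := by
  have hsub : {x : ℝ | x ∈ Set.Icc (0:ℝ) 1 ∧ |-Real.cos (2 * π * x) + 3 - c| < τ} ⊆
      {x : ℝ | x ∈ Set.Icc (0:ℝ) (1 / 2) ∧ |-Real.cos (2 * π * x) + 3 - c| < τ} ∪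
      {x : ℝ | x ∈ Set.Icc (1 / 2 : ℝ) 1 ∧ |-Real.cos (2 * π * x) + 3 - c| < τ} := by
    rintro x ⟨⟨h0, h1⟩, h⟩
    rcases le_total x (1 / 2) with h2 | h2
    · exact Or.inl ⟨⟨h0, h2⟩, h⟩
    · exact Or.inr ⟨⟨h2, h1⟩, h⟩
  have e : Real.sqrt τ = Real.sqrt τ / 2 + Real.sqrt τ / 2 := by ring
  have hn : 0 ≤ Real.sqrt τ / 2 := by positivity
  rw [e, ENNReal.ofReal_add hn hn]
  refine (measure_mono hsub).trans ((measure_union_le _ _).trans (add_le_add ?_ ?_))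
  · refine (Real.volume_le_diam _).trans (Metric.ediam_le ?_)
    rintro x ⟨⟨a, b⟩, h⟩ y ⟨⟨a', b'⟩, h'⟩
    rw [edist_dist, Real.dist_eq]
    exact ENNReal.ofReal_le_ofReal (dist_bound a b a' b' h h')
  · refine (Real.volume_le_diam _).trans (Metric.ediam_le ?_)
    rintro x ⟨⟨a, b⟩, h⟩ y ⟨⟨a', b'⟩, h'⟩
    rw [edist_dist, Real.dist_eq]
    have hc : ∀ z : ℝ, Real.cos (2 * π * z) = Real.cos (2 * π * (1 - z)) := by
      intro z
      rw [show 2 * π * (1 - z) = 2 * π - 2 * π * z by ring, Real.cos_two_pi_sub]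
    rw [hc] at h h'
    have := dist_bound (by linarith) (by linarith) (by linarith) (by linarith) h' h
    rw [show 1 - y - (1 - x) = x - y by ring] at this
    exact ENNReal.ofReal_le_ofReal this

/-- **Statement 17.** (Measure of the near-degenerate parameter set.) With
`α_1(k) := −cos 2πk + 3 − β` and `α_2(k) = α_3(k) := −cos 2πk + 3 − α`, the set
`U_τ = {(p₃,q₃) ∈ [0,1]² : |α_1(q₃)| < τ, |α_2(p₃)| < τ, |α_3(p₃−q₃)| < τ}` has Lebesgue
measure at most `C √τ`, uniformly in `α`, `β` and `0 < τ < 1`. -/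
theorem near_degenerate_set_measure :
    ∃ C : ℝ, 0 ≤ C ∧
      ∀ α β τ : ℝ, 0 < τ → τ < 1 →
        volume {x : ℝ × ℝ | x ∈ Set.Icc ((0:ℝ),(0:ℝ)) (1,1) ∧
            |(-Real.cos (2 * π * x.2) + 3 - β)| < τ ∧
            |(-Real.cos (2 * π * x.1) + 3 - α)| < τ ∧
            |(-Real.cos (2 * π * (x.1 - x.2)) + 3 - α)| < τ}
          ≤ ENNReal.ofReal (C * Real.sqrt τ) := by
  refine ⟨1, zero_le_one, fun α β τ _ _ => ?_⟩
  have hsub : {x : ℝ × ℝ | x ∈ Set.Icc ((0:ℝ),(0:ℝ)) (1,1) ∧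
            |(-Real.cos (2 * π * x.2) + 3 - β)| < τ ∧
            |(-Real.cos (2 * π * x.1) + 3 - α)| < τ ∧
            |(-Real.cos (2 * π * (x.1 - x.2)) + 3 - α)| < τ} ⊆
      {x : ℝ | x ∈ Set.Icc (0:ℝ) 1 ∧ |-Real.cos (2 * π * x) + 3 - α| < τ} ×ˢ
        Set.Icc (0:ℝ) 1 := by
    rintro ⟨p, q⟩ ⟨⟨h0, h1⟩, _, h2, _⟩
    exact ⟨⟨⟨h0.1, h1.1⟩, h2⟩, ⟨h0.2, h1.2⟩⟩
  refine (measure_mono hsub).trans ?_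
  rw [Measure.volume_eq_prod, Measure.prod_prod, Real.volume_Icc, one_mul]
  simpa using slice_measure α τ
end
end
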